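/- Let Z = X × Y where X, Y are nonempty closed convex sets in Euclidean spaces, let {f_i}_{i=1}^n be differentiable functions on Z that are L-average smooth, and suppose f = (1/n)∑_{i=1}^n f_i is (μ, μ)-convex-concave with 0 < μ ≤ L and has a saddle point z* ∈ Z. Fix z, w ∈ Z, set p = 1/(2n), τ = 1/(4√n·L), z̄ = (1−p)z + p·w and z' = P_Z(z̄ − τ·g(w)), and for each i ∈ {1,…,n} set z_+^{(i)} = P_Z(z̄ − τ·[g(w) + g_i(z') − g_i(w)]). Then (1 + τμ)·(1/n)∑_{i=1}^n ‖z_+^{(i)} − z*‖² ≤ (1−p)‖z − z*‖² + p‖w − z*‖². -/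

import Mathlib

/-!
Write `A i` for the gradient operator of the `i`-th component and `B` for their mean. Each corrected
step is an extragradient step from the anchor `(1 - p) z + p w`, with base direction `B w` and
correction `D = A i z' - A i w`. The variational inequalities of the two projections bound
`‖z₊ - z*‖²` up to the error `2τ⟪D, z' - z₊⟫`, which Young's inequality turns into `2τ²‖D‖²`. In the
mean over `i` the direction `B w + D` becomes `B z'`, so the strong monotonicity of `B` at the
saddle point applies, while average smoothness bounds the mean of `2τ²‖D‖²` by `2τ²L²‖z' - w‖²`.
The anchor contributes the negative term `-p‖z' - w‖²`, which absorbs this because `2τ²L² ≤ p`.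
-/

section UniformConvexity

open Filter Topology

variable {E : Type*} [NormedAddCommGroup E] [NormedSpace ℝ E]
  {s : Set E} {φ : ℝ → ℝ} {f : E → ℝ} {x y : E}

theorem slope_add_mul_modulus_le_of_uniformConvexOn (hf : UniformConvexOn s φ f) (hx : x ∈ s)
    (hy : y ∈ s) {t : ℝ} (ht : t ∈ Set.Ioo 0 1) :
    t⁻¹ * (f (x + t • (y - x)) - f x) + (1 - t) * φ ‖x - y‖ ≤ f y - f x := by
  have hconv := hf.2 hx hy (sub_nonneg.2 ht.2.le) ht.1.le (sub_add_cancel 1 t)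
  have hpoint : (1 - t) • x + t • y = x + t • (y - x) := by module
  rw [hpoint, smul_eq_mul, smul_eq_mul] at hconv
  rw [← le_sub_iff_add_le, inv_mul_le_iff₀ ht.1]
  linarith

theorem add_add_modulus_le_of_slope_tendsto (hf : UniformConvexOn s φ f) (hx : x ∈ s)
    (hy : y ∈ s) {c : ℝ → ℝ} {d : ℝ} (hc : Tendsto c (𝓝[>] 0) (𝓝 d))
    (hslope : ∀ t ∈ Set.Ioo (0 : ℝ) 1, c t ≤ t⁻¹ * (f (x + t • (y - x)) - f x)) :
    f x + d + φ ‖x - y‖ ≤ f y := by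
  have hmodulus : Tendsto (fun t : ℝ => (1 - t) * φ ‖x - y‖) (𝓝[>] 0)
      (𝓝 ((1 - 0) * φ ‖x - y‖)) :=
    (Continuous.tendsto (by fun_prop) 0).mono_left nhdsWithin_le_nhds
  have hlimit : d + (1 - 0) * φ ‖x - y‖ ≤ f y - f x := by
    refine le_of_tendsto (hc.add hmodulus) ?_
    filter_upwards [Ioo_mem_nhdsGT zero_lt_one] with t ht
    linarith [hslope t ht, slope_add_mul_modulus_le_of_uniformConvexOn hf hx hy ht]
  linarith

theorem add_lineDeriv_add_modulus_le_of_uniformConvexOn (hf : UniformConvexOn s φ f) (hx : x ∈ s)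
    (hy : y ∈ s) {f' : ℝ} (hf' : HasLineDerivAt ℝ f f' x (y - x)) :
    f x + f' + φ ‖x - y‖ ≤ f y :=
  add_add_modulus_le_of_slope_tendsto hf hx hy hf'.tendsto_slope_zero_right fun _ _ => le_rfl

theorem add_modulus_le_of_uniformConvexOn_of_isMinOn (hf : UniformConvexOn s φ f) (hx : x ∈ s)
    (hy : y ∈ s) (hmin : IsMinOn f s x) : f x + φ ‖x - y‖ ≤ f y := by
  have hslope : ∀ t ∈ Set.Ioo (0 : ℝ) 1, 0 ≤ t⁻¹ * (f (x + t • (y - x)) - f x) := fun t ht =>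
    mul_nonneg (inv_nonneg.2 ht.1.le)
      (sub_nonneg.2 (hmin (hf.1.add_smul_sub_mem hx hy ⟨ht.1.le, ht.2.le⟩)))
  simpa only [add_zero] using
    add_add_modulus_le_of_slope_tendsto hf hx hy tendsto_const_nhds hslope

end UniformConvexity

section Gradient

open Gradient RealInnerProductSpace

variable {E : Type*} [NormedAddCommGroup E] [InnerProductSpace ℝ E] [CompleteSpace E]

theorem add_inner_gradient_add_le_of_strongConvexOn {s : Set E} {m : ℝ} {f : E → ℝ} {x y : E}
    (hf : StrongConvexOn s m f) (hx : x ∈ s) (hy : y ∈ s) (hfx : DifferentiableAt ℝ f x) :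
    f x + ⟪∇ f x, y - x⟫ + m / 2 * ‖x - y‖ ^ 2 ≤ f y := by
  rw [inner_gradient_left]
  exact add_lineDeriv_add_modulus_le_of_uniformConvexOn hf hx hy
    (hfx.hasFDerivAt.hasLineDerivAt (y - x))

theorem gradient_neg (f : E → ℝ) (x : E) : ∇ (-f) x = -∇ f x := by
  simp only [gradient, fderiv_neg, map_neg]

theorem gradient_fun_sum_const_mul {ι : Type*} (s : Finset ι) (c : ι → ℝ) {f : ι → E → ℝ} {x : E}
    (hf : ∀ i ∈ s, DifferentiableAt ℝ (f i) x) :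
    ∇ (fun u => ∑ i ∈ s, c i * f i u) x = ∑ i ∈ s, c i • ∇ (f i) x := by
  refine ext_inner_right ℝ fun v => ?_
  rw [inner_gradient_left, fderiv_fun_sum fun i hi => (hf i hi).const_mul (c i), sum_inner,
    sum_apply]
  refine Finset.sum_congr rfl fun i hi => ?_
  rw [fderiv_const_mul (hf i hi), real_inner_smul_left, inner_gradient_left]
  rfl

end Gradient

section SaddleGradient

open Gradient RealInnerProductSpace

variable {E₁ E₂ : Type*} [NormedAddCommGroup E₁] [InnerProductSpace ℝ E₁] [CompleteSpace E₁]
  [NormedAddCommGroup E₂] [InnerProductSpace ℝ E₂] [CompleteSpace E₂]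

/-- The gradient operator `(∇ₓ φ, -∇_y φ)` of a function of two variables, acting on the Hilbert
product (hence `WithLp 2`: the norm of a bare `E₁ × E₂` is the maximum norm). -/
noncomputable def saddleGradient (φ : E₁ → E₂ → ℝ) (q : WithLp 2 (E₁ × E₂)) : WithLp 2 (E₁ × E₂) :=
  WithLp.toLp 2 (∇ (fun u => φ u q.snd) q.fst, -∇ (fun v => φ q.fst v) q.snd)

theorem norm_saddleGradient_sub_sq (φ : E₁ → E₂ → ℝ) (q q' : WithLp 2 (E₁ × E₂)) :
    ‖saddleGradient φ q - saddleGradient φ q'‖ ^ 2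
      = ‖∇ (fun u => φ u q.snd) q.fst - ∇ (fun u => φ u q'.snd) q'.fst‖ ^ 2
        + ‖∇ (fun v => φ q.fst v) q.snd - ∇ (fun v => φ q'.fst v) q'.snd‖ ^ 2 := by
  rw [WithLp.prod_norm_sq_eq_of_L2, ← norm_neg (_ - _ : WithLp 2 (E₁ × E₂)).snd]
  simp only [saddleGradient, WithLp.sub_fst, WithLp.sub_snd, WithLp.toLp_fst, WithLp.toLp_snd,
    neg_sub, sub_neg_eq_add, neg_add_eq_sub]

theorem saddleGradient_fun_sum_const_mul {ι : Type*} (s : Finset ι) (c : ι → ℝ)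
    {f : ι → E₁ → E₂ → ℝ} {q : WithLp 2 (E₁ × E₂)}
    (hf₁ : ∀ i ∈ s, DifferentiableAt ℝ (fun u => f i u q.snd) q.fst)
    (hf₂ : ∀ i ∈ s, DifferentiableAt ℝ (fun v => f i q.fst v) q.snd) :
    saddleGradient (fun x y => ∑ i ∈ s, c i * f i x y) q
      = ∑ i ∈ s, c i • saddleGradient (f i) q := by
  refine WithLp.ofLp_injective 2 (Prod.ext ?_ ?_)
  · simp only [saddleGradient, gradient_fun_sum_const_mul s c hf₁, WithLp.ofLp_sum, Prod.fst_sum,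
      WithLp.ofLp_smul, Prod.smul_fst]
  · simp only [saddleGradient, gradient_fun_sum_const_mul s c hf₂, WithLp.ofLp_sum, Prod.snd_sum,
      WithLp.ofLp_smul, Prod.smul_snd, smul_neg, Finset.sum_neg_distrib]

theorem mul_norm_sub_sq_le_inner_saddleGradient {X : Set E₁} {Y : Set E₂} {μx μy : ℝ}
    {F : E₁ → E₂ → ℝ} (hconv : ∀ y ∈ Y, StrongConvexOn X μx (fun x => F x y))
    (hconc : ∀ x ∈ X, StrongConcaveOn Y μy (F x)) {q qs : WithLp 2 (E₁ × E₂)}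
    (hqx : q.fst ∈ X) (hqy : q.snd ∈ Y) (hsx : qs.fst ∈ X) (hsy : qs.snd ∈ Y)
    (hsaddle : IsSaddlePointOn X Y F qs.fst qs.snd)
    (hFx : DifferentiableAt ℝ (fun u => F u q.snd) q.fst)
    (hFy : DifferentiableAt ℝ (F q.fst) q.snd) :
    μx * ‖q.fst - qs.fst‖ ^ 2 + μy * ‖q.snd - qs.snd‖ ^ 2 ≤ ⟪saddleGradient F q, q - qs⟫ := by
  have tangent_x := add_inner_gradient_add_le_of_strongConvexOn (hconv q.snd hqy) hqx hsx hFx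
  have tangent_y :=
    add_inner_gradient_add_le_of_strongConvexOn (hconc q.fst hqx).neg hqy hsy hFy.neg
  have growth_x := add_modulus_le_of_uniformConvexOn_of_isMinOn (hconv qs.snd hsy) hsx hqx
    fun u hu => hsaddle u hu qs.snd hsy
  have growth_y := add_modulus_le_of_uniformConvexOn_of_isMinOn (hconc qs.fst hsx).neg hsy hqy
    fun v hv => neg_le_neg (hsaddle qs.fst hsx v hv)
  have hinner : ⟪saddleGradient F q, q - qs⟫
      = -⟪∇ (fun u => F u q.snd) q.fst, qs.fst - q.fst⟫
        - ⟪∇ (-F q.fst) q.snd, qs.snd - q.snd⟫ := by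
    rw [gradient_neg, ← neg_sub q.fst, ← neg_sub q.snd, inner_neg_right, inner_neg_right, neg_neg,
      sub_neg_eq_add]
    rfl
  rw [norm_sub_rev] at growth_x growth_y
  simp only [Pi.neg_apply] at tangent_y growth_y
  linarith

end SaddleGradient

section NearestPoint

open RealInnerProductSpace

/-- `q` is a metric projection of `u` onto `s`. Stated as a relation, so that neither completeness
of `s` nor a choice of projection map is involved. -/
def IsNearestPoint {E : Type*} [NormedAddCommGroup E] (s : Set E) (u q : E) : Prop :=
  q ∈ s ∧ ∀ v ∈ s, ‖u - q‖ ≤ ‖u - v‖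

/-- The product of two sets, inside the Hilbert product of their ambient spaces. -/
def l2Prod {E₁ E₂ : Type*} (X : Set E₁) (Y : Set E₂) : Set (WithLp 2 (E₁ × E₂)) :=
  WithLp.ofLp ⁻¹' X ×ˢ Y

variable {E E₁ E₂ : Type*} [NormedAddCommGroup E] [InnerProductSpace ℝ E]
  [NormedAddCommGroup E₁] [NormedAddCommGroup E₂]

theorem convex_l2Prod [NormedSpace ℝ E₁] [NormedSpace ℝ E₂] {X : Set E₁} {Y : Set E₂}
    (hX : Convex ℝ X) (hY : Convex ℝ Y) : Convex ℝ (l2Prod X Y) :=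
  (hX.prod hY).linear_preimage (WithLp.linearEquiv 2 ℝ (E₁ × E₂)).toLinearMap

theorem isNearestPoint_l2Prod {X : Set E₁} {Y : Set E₂} {u : WithLp 2 (E₁ × E₂)} {q : E₁ × E₂}
    (hx : IsNearestPoint X u.fst q.1) (hy : IsNearestPoint Y u.snd q.2) :
    IsNearestPoint (l2Prod X Y) u (WithLp.toLp 2 q) := by
  refine ⟨⟨hx.1, hy.1⟩, fun v hv => ?_⟩
  rw [WithLp.prod_norm_eq_of_L2, WithLp.prod_norm_eq_of_L2]
  gcongr
  · exact hx.2 v.fst hv.1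
  · exact hy.2 v.snd hv.2

theorem IsNearestPoint.inner_nonpos {s : Set E} (hs : Convex ℝ s) {u q v : E}
    (hq : IsNearestPoint s u q) (hv : v ∈ s) : ⟪u - q, v - q⟫ ≤ 0 := by
  have : Nonempty s := ⟨⟨q, hq.1⟩⟩
  have hinf : ‖u - q‖ = ⨅ v : s, ‖u - v‖ :=
    le_antisymm (le_ciInf fun v => hq.2 v v.2)
      (ciInf_le ⟨0, Set.forall_mem_range.2 fun _ => norm_nonneg _⟩ (⟨q, hq.1⟩ : s))
  exact (norm_eq_iInf_iff_real_inner_le_zero hs hq.1).1 hinf v hv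

theorem IsNearestPoint.two_mul_inner_le {s : Set E} (hs : Convex ℝ s) {b d q v : E}
    (hq : IsNearestPoint s (b - d) q) (hv : v ∈ s) :
    2 * ⟪d, q - v⟫ ≤ ‖b - v‖ ^ 2 - ‖q - v‖ ^ 2 - ‖b - q‖ ^ 2 := by
  have hvar := hq.inner_nonpos hs hv
  rw [← neg_sub q v, inner_neg_right, sub_right_comm, inner_sub_left] at hvar
  have hexpand := norm_add_sq_real (b - q) (q - v)
  rw [sub_add_sub_cancel] at hexpand
  linarith

end NearestPoint

section Extragradient

open RealInnerProductSpace

theorem norm_sub_sq_le_two_mul_add {V : Type*} [SeminormedAddCommGroup V] (a b c : V) :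
    ‖a - c‖ ^ 2 ≤ 2 * (‖a - b‖ ^ 2 + ‖b - c‖ ^ 2) := by
  rw [← sub_add_sub_cancel a b c]
  exact (pow_le_pow_left₀ (norm_nonneg _) (norm_add_le _ _) 2).trans add_sq_le

variable {E : Type*} [NormedAddCommGroup E] [InnerProductSpace ℝ E]

theorem norm_convexCombination_sub_sq (p : ℝ) (z w v : E) :
    ‖(1 - p) • z + p • w - v‖ ^ 2
      = (1 - p) * ‖z - v‖ ^ 2 + p * ‖w - v‖ ^ 2 - p * (1 - p) * ‖z - w‖ ^ 2 := by
  have hcomb : (1 - p) • z + p • w - v = (1 - p) • (z - v) + p • (w - v) := by module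
  rw [hcomb, ← sub_sub_sub_cancel_right z w v, norm_add_sq_real, norm_sub_sq_real (z - v),
    norm_smul, norm_smul, mul_pow, mul_pow, Real.norm_eq_abs, Real.norm_eq_abs, sq_abs, sq_abs,
    real_inner_smul_left, real_inner_smul_right]
  ring

theorem two_mul_inner_le_two_mul_norm_sq_add (a b : E) :
    2 * ⟪a, b⟫ ≤ 2 * ‖a‖ ^ 2 + 1 / 2 * ‖b‖ ^ 2 := by
  linarith [real_inner_le_norm a b, two_mul_le_add_sq (2 * ‖a‖) ‖b‖]

variable {Z : Set E} {zs zh zp : E}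

theorem extragradient_inner_le (hZ : Convex ℝ Z) (hzs : zs ∈ Z) {b d e : E}
    (hzh : IsNearestPoint Z (b - d) zh) (hzp : IsNearestPoint Z (b - (d + e)) zp) :
    2 * ⟪d + e, zh - zs⟫ ≤ ‖b - zs‖ ^ 2 - ‖b - zh‖ ^ 2 - ‖zp - zs‖ ^ 2
      - 1 / 2 * ‖zp - zh‖ ^ 2 + 2 * ‖e‖ ^ 2 := by
  have hpredict := hzh.two_mul_inner_le hZ hzp.1
  have hcorrect := hzp.two_mul_inner_le hZ hzs
  have hyoung := two_mul_inner_le_two_mul_norm_sq_add e (zh - zp)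
  have hsplit : ⟪d + e, zh - zs⟫ = ⟪d, zh - zp⟫ + ⟪d + e, zp - zs⟫ + ⟪e, zh - zp⟫ := by
    rw [← sub_add_sub_cancel zh zp zs, inner_add_right, inner_add_left d e (zh - zp)]
    ring
  rw [norm_sub_rev zh zp] at hpredict hyoung
  linarith

theorem anchored_extragradient_le (hZ : Convex ℝ Z) (hzs : zs ∈ Z) {z w d e : E} {p m : ℝ}
    (hp : p ≤ 1) (hm₀ : 0 ≤ m) (hm : m ≤ 1 / 4)
    (hzh : IsNearestPoint Z ((1 - p) • z + p • w - d) zh)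
    (hzp : IsNearestPoint Z ((1 - p) • z + p • w - (d + e)) zp) :
    (1 + m) * ‖zp - zs‖ ^ 2 ≤ (1 - p) * ‖z - zs‖ ^ 2 + p * ‖w - zs‖ ^ 2 - p * ‖zh - w‖ ^ 2
      + 2 * m * ‖zh - zs‖ ^ 2 + 2 * ‖e‖ ^ 2 - 2 * ⟪d + e, zh - zs⟫ := by
  have hstep := extragradient_inner_le hZ hzs hzh hzp
  rw [norm_convexCombination_sub_sq, norm_convexCombination_sub_sq, norm_sub_rev w zh] at hstep
  have hmodulus := mul_le_mul_of_nonneg_left (norm_sub_sq_le_two_mul_add zp zh zs) hm₀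
  have habsorb := mul_le_mul_of_nonneg_right hm (sq_nonneg ‖zp - zh‖)
  have hanchor := mul_nonneg (sub_nonneg.2 hp) (sq_nonneg ‖z - zh‖)
  linarith

end Extragradient

section VarianceReduction

open RealInnerProductSpace

/-- `L`-average smoothness on `Z`, stated for the gradient operators `A i` of the components, which
are drawn with probabilities `π i` (uniform in the paper). -/
def IsAverageSmoothOn {ι E : Type*} [Fintype ι] [NormedAddCommGroup E] (π : ι → ℝ)
    (A : ι → E → E) (L : ℝ) (Z : Set E) : Prop :=
  ∀ q ∈ Z, ∀ q' ∈ Z, ∑ i, π i * ‖A i q - A i q'‖ ^ 2 ≤ L ^ 2 * ‖q - q'‖ ^ 2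

variable {ι E : Type*} [Fintype ι] [NormedAddCommGroup E] [InnerProductSpace ℝ E] {π : ι → ℝ}

theorem sum_smul_add_sub_eq (hπ : ∑ i, π i = 1) {a a' : ι → E} {b b' : E}
    (hb : ∑ i, π i • a i = b) (hb' : ∑ i, π i • a' i = b') :
    ∑ i, π i • (b' + (a i - a' i)) = b := by
  simp only [smul_add, smul_sub, Finset.sum_add_distrib, Finset.sum_sub_distrib, ← Finset.sum_smul,
    hπ, hb, hb', one_smul, add_sub_cancel]

theorem variance_reduced_extragradient_contraction
    (hπ₀ : ∀ i, 0 ≤ π i) (hπ : ∑ i, π i = 1) {Z : Set E} (hZ : Convex ℝ Z)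
    {A : ι → E → E} {B : E → E} (hB : ∀ q ∈ Z, ∑ i, π i • A i q = B q) {L μ p τ : ℝ}
    (hA : IsAverageSmoothOn π A L Z)
    {zs : E} (hzs : zs ∈ Z) (hmono : ∀ q ∈ Z, μ * ‖q - zs‖ ^ 2 ≤ ⟪B q, q - zs⟫)
    (hμ : 0 ≤ μ) (hp : p ≤ 1) (hτ : 0 ≤ τ) (hτμ : τ * μ ≤ 1 / 4) (hτL : 2 * τ ^ 2 * L ^ 2 ≤ p)
    {z w zh : E} {zp : ι → E} (hw : w ∈ Z)
    (hzh : IsNearestPoint Z ((1 - p) • z + p • w - τ • B w) zh)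
    (hzp : ∀ i, IsNearestPoint Z ((1 - p) • z + p • w - τ • (B w + A i zh - A i w)) (zp i)) :
    (1 + τ * μ) * ∑ i, π i * ‖zp i - zs‖ ^ 2
      ≤ (1 - p) * ‖z - zs‖ ^ 2 + p * ‖w - zs‖ ^ 2 := by
  set R := (1 - p) * ‖z - zs‖ ^ 2 + p * ‖w - zs‖ ^ 2 - p * ‖zh - w‖ ^ 2
    + 2 * (τ * μ) * ‖zh - zs‖ ^ 2 with R_def
  have hstep (i : ι) : (1 + τ * μ) * ‖zp i - zs‖ ^ 2 ≤ R + 2 * τ ^ 2 * ‖A i zh - A i w‖ ^ 2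
      - 2 * τ * ⟪B w + (A i zh - A i w), zh - zs⟫ := by
    have hzpi := hzp i
    rw [add_sub_assoc (B w), smul_add] at hzpi
    have hanchored := anchored_extragradient_le hZ hzs hp (mul_nonneg hτ hμ) hτμ hzh hzpi
    rw [← smul_add, real_inner_smul_left, norm_smul, mul_pow, Real.norm_eq_abs, sq_abs] at hanchored
    linarith [R_def]
  have hinner : ∑ i, π i * ⟪B w + (A i zh - A i w), zh - zs⟫ = ⟪B zh, zh - zs⟫ := by
    simp only [← real_inner_smul_left, ← sum_inner,
      sum_smul_add_sub_eq hπ (hB zh hzh.1) (hB w hw)]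
  have hmean : (1 + τ * μ) * ∑ i, π i * ‖zp i - zs‖ ^ 2
      ≤ R + 2 * τ ^ 2 * ∑ i, π i * ‖A i zh - A i w‖ ^ 2 - 2 * τ * ⟪B zh, zh - zs⟫ := by
    calc (1 + τ * μ) * ∑ i, π i * ‖zp i - zs‖ ^ 2
        = ∑ i, π i * ((1 + τ * μ) * ‖zp i - zs‖ ^ 2) := by
          simp only [Finset.mul_sum, mul_left_comm]
      _ ≤ ∑ i, π i * (R + 2 * τ ^ 2 * ‖A i zh - A i w‖ ^ 2
            - 2 * τ * ⟪B w + (A i zh - A i w), zh - zs⟫) :=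
          Finset.sum_le_sum fun i _ => mul_le_mul_of_nonneg_left (hstep i) (hπ₀ i)
      _ = _ := by
          simp only [mul_sub, mul_add, Finset.sum_sub_distrib, Finset.sum_add_distrib,
            ← Finset.sum_mul, hπ, one_mul, mul_left_comm (π _), ← Finset.mul_sum, hinner]
  have hsmooth := mul_le_mul_of_nonneg_left (hA zh hzh.1 w hw) (show 0 ≤ 2 * τ ^ 2 by positivity)
  have habsorb := mul_le_mul_of_nonneg_right hτL (sq_nonneg ‖zh - w‖)
  have hstrong := mul_le_mul_of_nonneg_left (hmono zh hzh.1) (show 0 ≤ 2 * τ by positivity)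
  linarith [R_def]

end VarianceReduction

section StepSize

theorem stepSize_mul_le {a L μ : ℝ} (ha : 1 ≤ a) (hμ : 0 ≤ μ) (hμL : μ ≤ L) :
    1 / (4 * √a * L) * μ ≤ 1 / 4 := by
  have hratio : μ / L ≤ 1 := div_le_one_of_le₀ hμL (hμ.trans hμL)
  have hsqrt : 1 / √a ≤ 1 := div_le_one_of_le₀ (Real.one_le_sqrt.2 ha) (Real.sqrt_nonneg a)
  calc 1 / (4 * √a * L) * μ = 1 / 4 * (1 / √a) * (μ / L) := by ring
    _ ≤ 1 / 4 * 1 * 1 := by gcongr; exact div_nonneg hμ (hμ.trans hμL)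
    _ = 1 / 4 := by norm_num

theorem two_mul_stepSize_sq_mul_sq_le {a L : ℝ} (ha : 0 ≤ a) :
    2 * (1 / (4 * √a * L)) ^ 2 * L ^ 2 ≤ 1 / (2 * a) := by
  have hratio : L ^ 2 / L ^ 2 ≤ 1 := div_self_le_one (L ^ 2)
  calc 2 * (1 / (4 * √a * L)) ^ 2 * L ^ 2 = 1 / 8 * (1 / √a ^ 2) * (L ^ 2 / L ^ 2) := by ring
    _ ≤ 1 / 2 * (1 / √a ^ 2) * 1 := by gcongr; norm_num
    _ = 1 / (2 * a) := by rw [Real.sq_sqrt ha]; ring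

end StepSize

theorem lsvre_one_step_contraction_general {ι E₁ E₂ : Type*} [Fintype ι]
    [NormedAddCommGroup E₁] [InnerProductSpace ℝ E₁] [CompleteSpace E₁]
    [NormedAddCommGroup E₂] [InnerProductSpace ℝ E₂] [CompleteSpace E₂]
    {π : ι → ℝ} (hπ₀ : ∀ i, 0 ≤ π i) (hπ : ∑ i, π i = 1)
    {X : Set E₁} {Y : Set E₂} (hX : Convex ℝ X) (hY : Convex ℝ Y)
    {f : ι → E₁ → E₂ → ℝ}
    (hf : ∀ i, ∀ q ∈ X ×ˢ Y, DifferentiableAt ℝ (fun q : E₁ × E₂ => f i q.1 q.2) q)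
    {L μ : ℝ} (hμ : 0 ≤ μ)
    (hsmooth : IsAverageSmoothOn π (fun i => saddleGradient (f i)) L (l2Prod X Y))
    {F : E₁ → E₂ → ℝ} (hF : F = fun x y => ∑ i, π i * f i x y)
    (hconv : ∀ y ∈ Y, StrongConvexOn X μ (fun x => F x y))
    (hconc : ∀ x ∈ X, StrongConcaveOn Y μ (F x))
    {zs : WithLp 2 (E₁ × E₂)} (hzs : zs ∈ l2Prod X Y)
    (hsaddle : IsSaddlePointOn X Y F zs.fst zs.snd)
    {p τ : ℝ} (hp : p ≤ 1) (hτ : 0 ≤ τ) (hτμ : τ * μ ≤ 1 / 4) (hτL : 2 * τ ^ 2 * L ^ 2 ≤ p)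
    {z w zh : WithLp 2 (E₁ × E₂)} {zp : ι → WithLp 2 (E₁ × E₂)} (hw : w ∈ l2Prod X Y)
    (hzh : IsNearestPoint (l2Prod X Y) ((1 - p) • z + p • w - τ • saddleGradient F w) zh)
    (hzp : ∀ i, IsNearestPoint (l2Prod X Y) ((1 - p) • z + p • w
      - τ • (saddleGradient F w + saddleGradient (f i) zh - saddleGradient (f i) w)) (zp i)) :
    (1 + τ * μ) * ∑ i, π i * ‖zp i - zs‖ ^ 2
      ≤ (1 - p) * ‖z - zs‖ ^ 2 + p * ‖w - zs‖ ^ 2 := by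
  have hfx (q) (hq : q ∈ l2Prod X Y) (i : ι) :
      DifferentiableAt ℝ (fun u => f i u q.snd) q.fst :=
    (hf i (q.fst, q.snd) hq).comp (f := fun u => (u, q.snd)) q.fst (by fun_prop)
  have hfy (q) (hq : q ∈ l2Prod X Y) (i : ι) :
      DifferentiableAt ℝ (fun v => f i q.fst v) q.snd :=
    (hf i (q.fst, q.snd) hq).comp (f := fun v => (q.fst, v)) q.snd (by fun_prop)
  have hmean (q) (hq : q ∈ l2Prod X Y) :
      ∑ i, π i • saddleGradient (f i) q = saddleGradient F q := by
    rw [hF, saddleGradient_fun_sum_const_mul _ _ (fun i _ => hfx q hq i) fun i _ => hfy q hq i]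
  have hmono (q) (hq : q ∈ l2Prod X Y) : μ * ‖q - zs‖ ^ 2
      ≤ inner ℝ (saddleGradient F q) (q - zs) := by
    rw [WithLp.prod_norm_sq_eq_of_L2, mul_add]
    refine mul_norm_sub_sq_le_inner_saddleGradient hconv hconc hq.1 hq.2 hzs.1 hzs.2 hsaddle ?_ ?_
    · rw [hF]
      exact DifferentiableAt.fun_sum fun i _ => (hfx q hq i).const_mul (π i)
    · rw [hF]
      exact DifferentiableAt.fun_sum fun i _ => (hfy q hq i).const_mul (π i)
  exact variance_reduced_extragradient_contraction hπ₀ hπ (convex_l2Prod hX hY) hmean hsmooth hzs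
    hmono hμ hp hτ hτμ hτL hw hzh hzp

/-- One-step contraction of L-SVRE, in expectation over the uniformly drawn
component index. Here `Z = X × Y`, `{f i}` is `L`-average smooth, `f` is `(μ, μ)`-convex-
concave with saddle point `z* = (x*, y*)`, `p = 1/(2n)`, `τ = 1/(4√n L)`,
`z̄ = (1−p)z + p w`, `z' = P_Z(z̄ − τ g(w))`, and for each `i`,
`z₊⁽ⁱ⁾ = P_Z(z̄ − τ(g(w) + gᵢ(z') − gᵢ(w)))`. Then
`(1 + τμ)(1/n)∑ᵢ ‖z₊⁽ⁱ⁾ − z*‖² ≤ (1−p)‖z − z*‖² + p‖w − z*‖²`. -/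
theorem lsvre_one_step_contraction
    {dx dy n : ℕ} (hn : 0 < n)
    (X : Set (EuclideanSpace ℝ (Fin dx))) (Y : Set (EuclideanSpace ℝ (Fin dy)))
    (hXne : X.Nonempty) (hXcl : IsClosed X) (hXcv : Convex ℝ X)
    (hYne : Y.Nonempty) (hYcl : IsClosed Y) (hYcv : Convex ℝ Y)
    (f : Fin n → EuclideanSpace ℝ (Fin dx) → EuclideanSpace ℝ (Fin dy) → ℝ)
    (hdiff : ∀ i, Differentiable ℝ
      (fun p : EuclideanSpace ℝ (Fin dx) × EuclideanSpace ℝ (Fin dy) => f i p.1 p.2))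
    (L μ : ℝ) (hμ : 0 < μ) (hμL : μ ≤ L)
    (havg : ∀ x x' : EuclideanSpace ℝ (Fin dx), ∀ y y' : EuclideanSpace ℝ (Fin dy),
      (n : ℝ)⁻¹ * ∑ i,
          (‖gradient (fun u => f i u y) x - gradient (fun u => f i u y') x'‖ ^ 2 +
            ‖gradient (fun v => f i x v) y - gradient (fun v => f i x' v) y'‖ ^ 2)
        ≤ L ^ 2 * (‖x - x'‖ ^ 2 + ‖y - y'‖ ^ 2))
    (F : EuclideanSpace ℝ (Fin dx) → EuclideanSpace ℝ (Fin dy) → ℝ)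
    (hF : F = fun x y => (n : ℝ)⁻¹ * ∑ i, f i x y)
    (hconv : ∀ y ∈ Y, StrongConvexOn X μ (fun x => F x y))
    (hconc : ∀ x ∈ X, StrongConcaveOn Y μ (F x))
    (zs : EuclideanSpace ℝ (Fin dx) × EuclideanSpace ℝ (Fin dy))
    (hzs : zs.1 ∈ X ∧ zs.2 ∈ Y)
    (hsaddle : ∀ x ∈ X, ∀ y ∈ Y, F zs.1 y ≤ F zs.1 zs.2 ∧ F zs.1 zs.2 ≤ F x zs.2)
    (PX : EuclideanSpace ℝ (Fin dx) → EuclideanSpace ℝ (Fin dx))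
    (hPX : ∀ u, PX u ∈ X ∧ ∀ v ∈ X, ‖u - PX u‖ ≤ ‖u - v‖)
    (PY : EuclideanSpace ℝ (Fin dy) → EuclideanSpace ℝ (Fin dy))
    (hPY : ∀ u, PY u ∈ Y ∧ ∀ v ∈ Y, ‖u - PY u‖ ≤ ‖u - v‖)
    -- gradient operators
    (g : Fin n → EuclideanSpace ℝ (Fin dx) × EuclideanSpace ℝ (Fin dy) →
      EuclideanSpace ℝ (Fin dx) × EuclideanSpace ℝ (Fin dy))
    (hg : g = fun i z =>
      (gradient (fun u => f i u z.2) z.1, -(gradient (fun v => f i z.1 v) z.2)))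
    (G : EuclideanSpace ℝ (Fin dx) × EuclideanSpace ℝ (Fin dy) →
      EuclideanSpace ℝ (Fin dx) × EuclideanSpace ℝ (Fin dy))
    (hG : G = fun z =>
      (gradient (fun u => F u z.2) z.1, -(gradient (fun v => F z.1 v) z.2)))
    (p τ : ℝ) (hp : p = 1 / (2 * n)) (hτ : τ = 1 / (4 * Real.sqrt n * L))
    (z w : EuclideanSpace ℝ (Fin dx) × EuclideanSpace ℝ (Fin dy))
    (hz : z.1 ∈ X ∧ z.2 ∈ Y) (hw : w.1 ∈ X ∧ w.2 ∈ Y)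
    (zb : EuclideanSpace ℝ (Fin dx) × EuclideanSpace ℝ (Fin dy))
    (hzb : zb = (1 - p) • z + p • w)
    (zhalf : EuclideanSpace ℝ (Fin dx) × EuclideanSpace ℝ (Fin dy))
    (hzhalf : zhalf = (PX (zb - τ • G w).1, PY (zb - τ • G w).2))
    (zplus : Fin n → EuclideanSpace ℝ (Fin dx) × EuclideanSpace ℝ (Fin dy))
    (hzplus : zplus = fun i =>
      (PX (zb - τ • (G w + g i zhalf - g i w)).1, PY (zb - τ • (G w + g i zhalf - g i w)).2)) :
    (1 + τ * μ) * ((n : ℝ)⁻¹ * ∑ i,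
        (‖(zplus i).1 - zs.1‖ ^ 2 + ‖(zplus i).2 - zs.2‖ ^ 2))
      ≤ (1 - p) * (‖z.1 - zs.1‖ ^ 2 + ‖z.2 - zs.2‖ ^ 2)
        + p * (‖w.1 - zs.1‖ ^ 2 + ‖w.2 - zs.2‖ ^ 2) := by
  have hn₁ : (1 : ℝ) ≤ n := Nat.one_le_cast.2 hn
  have hL : 0 ≤ L := hμ.le.trans hμL
  have hp₁ : 1 / (2 * (n : ℝ)) ≤ 1 := div_le_one_of_le₀ (by linarith) (by positivity)
  have hsmooth : IsAverageSmoothOn (fun _ => (n : ℝ)⁻¹) (fun i => saddleGradient (f i)) L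
      (l2Prod X Y) := fun q _ q' _ => by
    simpa only [norm_saddleGradient_sub_sq, WithLp.prod_norm_sq_eq_of_L2 (q - q'), Finset.mul_sum]
      using! havg q.fst q'.fst q.snd q'.snd
  subst hp hτ hg hG hzb
  have contraction := lsvre_one_step_contraction_general (fun _ => by positivity)
    (by simp [hn.ne']) hXcv hYcv (fun i q _ => hdiff i q) hμ.le hsmooth
    (by simpa only [Finset.mul_sum] using hF) hconv hconc (zs := WithLp.toLp 2 zs) hzs
    (fun x hx y hy => (hsaddle x hx y hy).1.trans (hsaddle x hx y hy).2)
    hp₁ (by positivity) (stepSize_mul_le hn₁ hμ.le hμL)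
    (two_mul_stepSize_sq_mul_sq_le n.cast_nonneg)
    (z := WithLp.toLp 2 z) (w := WithLp.toLp 2 w) hw
    (zh := WithLp.toLp 2 zhalf) (by rw [hzhalf]; exact isNearestPoint_l2Prod (hPX _) (hPY _))
    (zp := fun i => WithLp.toLp 2 (zplus i))
    (fun i => by rw [hzplus]; exact isNearestPoint_l2Prod (hPX _) (hPY _))
  simpa only [WithLp.prod_norm_sq_eq_of_L2, ← Finset.mul_sum] using! contraction
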